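/- arXiv:1501.03221 — 3 statements merged into one kernel-verified Lean document; each statement's English description precedes it below -/
import Mathlib

section
/- Let p > K ≥ 1, let S be a p×p real symmetric positive semidefinite matrix, let Φ be a p×K real matrix with ΦᵀΦ = I_K, and let γ ≥ 0. Suppose ΦᵀSΦ = V·diag(d₁,…,d_K)·Vᵀ with V a K×K orthogonal matrix and d₁ ≥ d₂ ≥ … ≥ d_K. If d₁ ≤ γ, then setting σ̂² = tr(S)/p and Λ̂ = V·diag((d₁ − σ̂² − γ)₊, …, (d_K − σ̂² − γ)₊)·Vᵀ (which equals the zero matrix), the pair (Λ̂, σ̂²) minimizes h(Λ, σ²) = (1/2)‖S − ΦΛΦᵀ − σ²I_p‖²_F + γ·tr(Λ) over all real σ² ≥ 0 and all K×K real symmetric positive semidefinite matrices Λ; that is, h(Λ̂, σ̂²) ≤ h(Λ, σ²) for all such (Λ, σ²). -/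
open Matrix BigOperators

/-- Squared Frobenius norm of a real matrix. -/
noncomputable def frobSq {m n : Type*} [Fintype m] [Fintype n] (M : Matrix m n ℝ) : ℝ :=
  ∑ i, ∑ j, (M i j) ^ 2

/-!
Write `A = ΦΛΦᵀ` and `s̄ = tr(S)/p`. Splitting off the mean of the diagonal of `S` gives
`‖S − A − sI‖² = ‖S − s̄I‖² + p(s − s̄)² + ‖A‖² + 2s tr(A) − 2⟨A, S⟩`, so for `s ≥ 0` and `A ⪰ 0`
only the pairing `⟨A, S⟩ = tr(Λ ΦᵀSΦ)` can push the objective below its value at `(0, s̄)`.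
If `ΦᵀSΦ ⪯ γI`, the pairing is at most `γ tr(Λ)`, which is exactly the penalty.
-/

open scoped ComplexOrder MatrixOrder in
theorem trace_mul_nonneg_of_posSemidef {n 𝕜 : Type*} [Fintype n] [RCLike 𝕜]
    {A B : Matrix n n 𝕜} (hA : A.PosSemidef) (hB : B.PosSemidef) : 0 ≤ (A * B).trace := by
  classical
  obtain ⟨C, rfl⟩ := CStarAlgebra.nonneg_iff_eq_star_mul_self.mp hB.nonneg
  rw [← Matrix.mul_assoc, Matrix.trace_mul_comm, ← Matrix.mul_assoc]
  exact (hA.mul_mul_conjTranspose_same C).trace_nonneg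

theorem frobSq_eq_trace_transpose_mul_self {m n : Type*} [Fintype m] [Fintype n]
    (M : Matrix m n ℝ) : frobSq M = (Mᵀ * M).trace := by
  simp only [frobSq, trace, diag_apply, mul_apply, transpose_apply, sq]
  exact Finset.sum_comm

theorem frobSq_nonneg {m n : Type*} [Fintype m] [Fintype n] (M : Matrix m n ℝ) : 0 ≤ frobSq M :=
  Finset.sum_nonneg fun _ _ => Finset.sum_nonneg fun _ _ => sq_nonneg _

theorem frobSq_sub {m n : Type*} [Fintype m] [Fintype n] (M N : Matrix m n ℝ) :
    frobSq (M - N) = frobSq M - 2 * (Nᵀ * M).trace + frobSq N := by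
  have trace_symm : (Mᵀ * N).trace = (Nᵀ * M).trace := by
    rw [← trace_transpose, transpose_mul, transpose_transpose]
  simp only [frobSq_eq_trace_transpose_mul_self, transpose_sub, Matrix.sub_mul, Matrix.mul_sub,
    trace_sub, trace_symm]
  ring

section MeanDiag

variable {m : Type*} [Fintype m] [DecidableEq m] [Nonempty m]

theorem frobSq_sub_smul_one_eq_add_sq (S : Matrix m m ℝ) (s : ℝ) :
    frobSq (S - s • (1 : Matrix m m ℝ)) =
      frobSq (S - (S.trace / Fintype.card m) • (1 : Matrix m m ℝ)) +
        Fintype.card m * (s - S.trace / Fintype.card m) ^ 2 := by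
  have expand (t : ℝ) : frobSq (S - t • (1 : Matrix m m ℝ)) =
      frobSq S - 2 * (t * S.trace) + t ^ 2 * Fintype.card m := by
    rw [frobSq_sub, frobSq_eq_trace_transpose_mul_self (t • 1)]
    simp only [transpose_smul, transpose_one, Matrix.smul_mul, Matrix.mul_smul, Matrix.one_mul,
      trace_smul, trace_one, smul_eq_mul]
    ring
  rw [expand, expand]
  field_simp
  ring

theorem frobSq_sub_mean_diag_le_add_trace (S : Matrix m m ℝ) {A : Matrix m m ℝ} (hA : 0 ≤ A.trace)
    {s : ℝ} (hs : 0 ≤ s) :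
    frobSq (S - (S.trace / Fintype.card m) • (1 : Matrix m m ℝ)) ≤
      frobSq (S - A - s • (1 : Matrix m m ℝ)) + 2 * (Aᵀ * S).trace := by
  have expand : frobSq (S - A - s • (1 : Matrix m m ℝ)) =
      frobSq (S - s • (1 : Matrix m m ℝ)) - 2 * ((Aᵀ * S).trace - s * A.trace) + frobSq A := by
    rw [sub_right_comm, frobSq_sub, Matrix.mul_sub, trace_sub, Matrix.mul_smul, Matrix.mul_one,
      trace_smul, trace_transpose, smul_eq_mul]
  have hvar : 0 ≤ Fintype.card m * (s - S.trace / Fintype.card m) ^ 2 := by positivity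
  rw [expand, frobSq_sub_smul_one_eq_add_sq S s]
  linarith [frobSq_nonneg A, mul_nonneg hs hA]

end MeanDiag

section PenalizedLeastSquares

variable {m n : Type*} [Fintype m] [Fintype n] [DecidableEq n]

theorem posSemidef_smul_one_sub_conj_diagonal {V : Matrix n n ℝ} (hV : Vᵀ * V = 1)
    {d : n → ℝ} {c : ℝ} (hd : ∀ k, d k ≤ c) :
    (c • (1 : Matrix n n ℝ) - V * diagonal d * Vᵀ).PosSemidef := by
  have hdiag : c • (1 : Matrix n n ℝ) - V * diagonal d * Vᵀ =
      V * diagonal (fun k => c - d k) * Vᵀ := by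
    rw [← diagonal_sub, Matrix.mul_sub, Matrix.sub_mul, ← smul_one_eq_diagonal, Matrix.mul_smul,
      Matrix.smul_mul, Matrix.mul_one, mul_eq_one_comm.mp hV]
  rw [hdiag]
  exact (PosSemidef.diagonal fun k => sub_nonneg.mpr (hd k)).mul_mul_conjTranspose_same V

theorem trace_transpose_conj_mul_le {S : Matrix m m ℝ} {Φ : Matrix m n ℝ} {γ : ℝ}
    (hγ : (γ • (1 : Matrix n n ℝ) - Φᵀ * S * Φ).PosSemidef) {Λ : Matrix n n ℝ}
    (hΛ : Λ.PosSemidef) :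
    ((Φ * Λ * Φᵀ)ᵀ * S).trace ≤ γ * Λ.trace := by
  have hΛsymm : Λᵀ = Λ := hΛ.isHermitian
  have hcycle : ((Φ * Λ * Φᵀ)ᵀ * S).trace = (Λ * (Φᵀ * S * Φ)).trace := by
    rw [transpose_mul, transpose_mul, transpose_transpose, hΛsymm, Matrix.mul_assoc,
      Matrix.trace_mul_comm]
    simp only [Matrix.mul_assoc]
  have hnonneg := trace_mul_nonneg_of_posSemidef hΛ hγ
  rw [Matrix.mul_sub, trace_sub, Matrix.mul_smul, Matrix.mul_one, trace_smul, smul_eq_mul]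
    at hnonneg
  rw [hcycle]
  exact sub_nonneg.mp hnonneg

theorem half_frobSq_sub_mean_diag_le_add_mul_trace [DecidableEq m] [Nonempty m] {S : Matrix m m ℝ}
    {Φ : Matrix m n ℝ} {γ : ℝ} (hγ : (γ • (1 : Matrix n n ℝ) - Φᵀ * S * Φ).PosSemidef)
    {Λ : Matrix n n ℝ} (hΛ : Λ.PosSemidef) {σ2 : ℝ} (hσ2 : 0 ≤ σ2) :
    (1 / 2) * frobSq (S - (S.trace / Fintype.card m) • (1 : Matrix m m ℝ)) ≤
      (1 / 2) * frobSq (S - Φ * Λ * Φᵀ - σ2 • (1 : Matrix m m ℝ)) + γ * Λ.trace := by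
  have htrace : 0 ≤ (Φ * Λ * Φᵀ).trace := (hΛ.mul_mul_conjTranspose_same Φ).trace_nonneg
  linarith [frobSq_sub_mean_diag_le_add_trace S htrace hσ2, trace_transpose_conj_mul_le hγ hΛ]

theorem stmt_0_general [DecidableEq m] [Nonempty m]
    (S : Matrix m m ℝ) (hS : 0 ≤ S.trace) (Φ : Matrix m n ℝ) (γ : ℝ)
    (d : n → ℝ) (hd : ∀ k, d k ≤ γ)
    (V : Matrix n n ℝ) (hV : Vᵀ * V = 1) (hdecomp : Φᵀ * S * Φ = V * diagonal d * Vᵀ)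
    (σ2hat : ℝ) (hσ2hat : σ2hat = S.trace / Fintype.card m)
    (Λhat : Matrix n n ℝ)
    (hΛhat : Λhat = V * diagonal (fun k => max (d k - σ2hat - γ) 0) * Vᵀ)
    (σ2 : ℝ) (hσ2 : 0 ≤ σ2) (Λ : Matrix n n ℝ) (hΛ : Λ.PosSemidef) :
    (1 / 2) * frobSq (S - Φ * Λhat * Φᵀ - σ2hat • (1 : Matrix m m ℝ)) + γ * Λhat.trace ≤
      (1 / 2) * frobSq (S - Φ * Λ * Φᵀ - σ2 • (1 : Matrix m m ℝ)) + γ * Λ.trace := by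
  have hσ2hat_nonneg : 0 ≤ σ2hat := hσ2hat ▸ div_nonneg hS (Nat.cast_nonneg _)
  have hthreshold (k : n) : max (d k - σ2hat - γ) 0 = 0 := max_eq_right (by linarith [hd k])
  have hΛhat_zero : Λhat = 0 := by
    simp only [hΛhat, hthreshold, diagonal_zero, Matrix.mul_zero, Matrix.zero_mul]
  have hγ : (γ • (1 : Matrix n n ℝ) - Φᵀ * S * Φ).PosSemidef :=
    hdecomp ▸ posSemidef_smul_one_sub_conj_diagonal hV hd
  simpa only [hΛhat_zero, hσ2hat, Matrix.mul_zero, Matrix.zero_mul, sub_zero, trace_zero,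
    mul_zero, add_zero] using half_frobSq_sub_mean_diag_le_add_mul_trace hγ hΛ hσ2

end PenalizedLeastSquares

/-- Proposition 1 of the paper, case `d₁ ≤ γ`: with `σ̂² = tr(S)/p` and
`Λ̂ = V diag((dₖ − σ̂² − γ)₊) Vᵀ`, the pair `(Λ̂, σ̂²)` minimizes
`h(Λ, σ²) = (1/2)‖S − ΦΛΦᵀ − σ²I‖²_F + γ tr(Λ)` over `σ² ≥ 0` and PSD `Λ`. -/
theorem stmt_0 (p K : ℕ) (hK : 1 ≤ K) (hpK : K < p)
    (S : Matrix (Fin p) (Fin p) ℝ) (hS : S.PosSemidef)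
    (Φ : Matrix (Fin p) (Fin K) ℝ) (hΦ : Φᵀ * Φ = 1)
    (γ : ℝ) (hγ : 0 ≤ γ)
    (d : Fin K → ℝ) (hd : Antitone d)
    (V : Matrix (Fin K) (Fin K) ℝ) (hV : Vᵀ * V = 1)
    (hdecomp : Φᵀ * S * Φ = V * Matrix.diagonal d * Vᵀ)
    (hd1 : d ⟨0, hK⟩ ≤ γ)
    (σ2hat : ℝ) (hσ2hat : σ2hat = S.trace / p)
    (Λhat : Matrix (Fin K) (Fin K) ℝ)
    (hΛhat : Λhat = V * Matrix.diagonal (fun k => max (d k - σ2hat - γ) 0) * Vᵀ) :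
    ∀ σ2 : ℝ, 0 ≤ σ2 → ∀ Λ : Matrix (Fin K) (Fin K) ℝ, Λ.PosSemidef →
      (1 / 2) * frobSq (S - Φ * Λhat * Φᵀ - σ2hat • (1 : Matrix (Fin p) (Fin p) ℝ))
          + γ * Λhat.trace ≤
        (1 / 2) * frobSq (S - Φ * Λ * Φᵀ - σ2 • (1 : Matrix (Fin p) (Fin p) ℝ))
          + γ * Λ.trace := by
  have : Nonempty (Fin p) := ⟨⟨K, hpK⟩⟩
  exact stmt_0_general S hS.trace_nonneg Φ γ d (fun k => (hd (Nat.zero_le k.val)).trans hd1) V hV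
    hdecomp σ2hat (by rwa [Fintype.card_fin]) Λhat hΛhat
end

section
/- Let p > K ≥ 1 be integers, let d₁ ≥ d₂ ≥ … ≥ d_K ≥ 0 be real numbers, let γ ≥ 0, and let T be a real number with T ≥ Σ_{k=1}^{K} d_k. Assume d₁ > γ and that the set 𝓛 = { L ∈ {1,…,K} : d_L − γ > (T − Σ_{k=1}^{L}(d_k − γ))/(p − L) } is nonempty. Set L̂ = max 𝓛 and x̂ = (T − Σ_{k=1}^{L̂}(d_k − γ))/(p − L̂). Then x̂ ≥ 0 and x̂ minimizes the function g(x) = p·x² − 2·x·T − Σ_{k=1}^{K} ((d_k − x − γ)₊)² over all x ≥ 0; that is, g(x̂) ≤ g(x) for every x ≥ 0. -/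
open BigOperators

/-!
Put `a k = d k - γ`. Half the derivative of the objective `g` is `p x - T + ∑ k, (a k - x)⁺`. The
square of the positive part has a derivative with Lipschitz constant `2`, so `g` minus
`(p - K) x²` is convex, and every stationary point `y` of `g` satisfies
`g y + (p - K) (x - y)² ≤ g x`.

If exactly the indices in `s` have `a k > x`, stationarity is a linear equation whose solution is
`(T - ∑ k ∈ s, a k) / (p - #s)`. Enlarging `s` by indices whose values lie above this level lowers
the level. So if some `j > L̂` had `a j > x̂`, then all of `(L̂, j]` would lie above `x̂`, the level
at `j` would be at most `x̂ < a j`, and `j` would contradict the maximality of `L̂`.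
-/

lemma sum_sub_const_le_sum_univ {ι M : Type*} [Fintype ι] [AddCommGroup M] [PartialOrder M]
    [IsOrderedAddMonoid M] {d : ι → M} (hd : ∀ k, 0 ≤ d k) {γ : M} (hγ : 0 ≤ γ) (s : Finset ι) :
    ∑ k ∈ s, (d k - γ) ≤ ∑ k, d k :=
  calc ∑ k ∈ s, (d k - γ) ≤ ∑ k ∈ s, d k := Finset.sum_le_sum fun k _ ↦ sub_le_self (d k) hγ
    _ ≤ ∑ k, d k := Finset.sum_le_univ_sum_of_nonneg hd

section OrderedRing

variable {R : Type*} [CommRing R] [LinearOrder R] [IsStrictOrderedRing R]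

lemma sq_posPart_le_sq_add (u : R) {t : R} (ht : 0 ≤ t) : u⁺ ^ 2 ≤ (u + t) ^ 2 := by
  rcases le_total u 0 with hu | hu
  · simpa [posPart_of_nonpos hu] using sq_nonneg (u + t)
  · rw [posPart_of_nonneg hu]
    gcongr
    exact le_add_of_nonneg_right ht

lemma sq_posPart_le_add_mul_add_sq (u v : R) :
    u⁺ ^ 2 ≤ v⁺ ^ 2 + 2 * (u - v) * v⁺ + (u - v) ^ 2 := by
  have hv : v⁻ = v⁺ - v := by linear_combination -posPart_sub_negPart v
  calc u⁺ ^ 2 ≤ (u + v⁻) ^ 2 := sq_posPart_le_sq_add u (negPart_nonneg v)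
    _ = v⁺ ^ 2 + 2 * (u - v) * v⁺ + (u - v) ^ 2 := by rw [hv]; ring

variable {ι : Type*} [Fintype ι] {p T x y : R} {a : ι → R} {s : Finset ι}

/-- The objective `g` of the scalar minimization, as a function of the noise variance `x`, with the
shift by `γ` absorbed into `a k = d k - γ`. -/
def profiledObjective (p T : R) (a : ι → R) (x : R) : R :=
  p * x ^ 2 - 2 * x * T - ∑ k, (a k - x)⁺ ^ 2

lemma profiledObjective_add_sq_le_of_stationary (hy : p * y + ∑ k, (a k - y)⁺ = T) (x : R) :
    profiledObjective p T a y + (p - Fintype.card ι) * (x - y) ^ 2 ≤ profiledObjective p T a x := by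
  have hsum : ∑ k, (a k - x)⁺ ^ 2 ≤
      ∑ k, (a k - y)⁺ ^ 2 + 2 * (y - x) * ∑ k, (a k - y)⁺ + Fintype.card ι * (x - y) ^ 2 := by
    calc ∑ k, (a k - x)⁺ ^ 2
        ≤ ∑ k, ((a k - y)⁺ ^ 2 + 2 * (y - x) * (a k - y)⁺ + (x - y) ^ 2) := by
          gcongr with k
          convert sq_posPart_le_add_mul_add_sq (a k - x) (a k - y) using 1
          ring
      _ = _ := by
          simp only [Finset.sum_add_distrib, ← Finset.mul_sum, Finset.sum_const, Finset.card_univ,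
            nsmul_eq_mul]
  subst hy
  unfold profiledObjective
  linarith

lemma sum_posPart_sub_eq (hs : ∀ k ∈ s, x ≤ a k) (hs' : ∀ k ∉ s, a k ≤ x) :
    ∑ k, (a k - x)⁺ = ∑ k ∈ s, a k - s.card * x := by
  calc ∑ k, (a k - x)⁺ = ∑ k ∈ s, (a k - x)⁺ :=
        (Finset.sum_subset s.subset_univ fun k _ hk ↦
          posPart_of_nonpos (sub_nonpos.mpr (hs' k hk))).symm
    _ = ∑ k ∈ s, (a k - x) :=
        Finset.sum_congr rfl fun k hk ↦ posPart_of_nonneg (sub_nonneg.mpr (hs k hk))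
    _ = ∑ k ∈ s, a k - s.card * x := by
        rw [Finset.sum_sub_distrib, Finset.sum_const, nsmul_eq_mul]

end OrderedRing

section OrderedField

variable {𝕜 ι : Type*} [Field 𝕜] {p T : 𝕜} {a : ι → 𝕜} {s t : Finset ι}

/-- The stationary point of `profiledObjective p T a` when `s` is its set of active indices, those
with `a k` above the point. For `s = {1, …, L}` it is the candidate noise variance at `L`. -/
def stationaryLevel (p T : 𝕜) (a : ι → 𝕜) (s : Finset ι) : 𝕜 :=
  (T - ∑ k ∈ s, a k) / (p - s.card)

lemma stationaryLevel_mul_sub_card (hs : p ≠ s.card) :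
    stationaryLevel p T a s * (p - s.card) = T - ∑ k ∈ s, a k :=
  div_mul_cancel₀ _ (sub_ne_zero.mpr hs)

variable [LinearOrder 𝕜] [IsStrictOrderedRing 𝕜]

lemma stationaryLevel_nonneg_iff (hs : (s.card : 𝕜) < p) :
    0 ≤ stationaryLevel p T a s ↔ ∑ k ∈ s, a k ≤ T := by
  rw [stationaryLevel, le_div_iff₀ (sub_pos.mpr hs), zero_mul, sub_nonneg]

lemma stationaryLevel_le_of_subset [DecidableEq ι] (hst : s ⊆ t) (ht : (t.card : 𝕜) < p)
    (h : ∀ k ∈ t \ s, stationaryLevel p T a s ≤ a k) :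
    stationaryLevel p T a t ≤ stationaryLevel p T a s := by
  have hcard : ((t \ s).card : 𝕜) + s.card = t.card :=
    mod_cast Finset.card_sdiff_add_card_eq_card hst
  have hs := stationaryLevel_mul_sub_card (T := T) (a := a)
    (lt_of_le_of_lt (mod_cast Finset.card_le_card hst) ht).ne'
  have hadded : (t \ s).card * stationaryLevel p T a s ≤ ∑ k ∈ t \ s, a k := by
    simpa only [nsmul_eq_mul] using Finset.card_nsmul_le_sum _ _ _ h
  have hsum := Finset.sum_sdiff (f := a) hst
  rw [stationaryLevel, div_le_iff₀ (sub_pos.mpr ht), ← hcard]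
  linarith

lemma mul_stationaryLevel_add_sum_posPart [Fintype ι] (hp : p ≠ s.card)
    (hs : ∀ k ∈ s, stationaryLevel p T a s ≤ a k) (hs' : ∀ k ∉ s, a k ≤ stationaryLevel p T a s) :
    p * stationaryLevel p T a s + ∑ k, (a k - stationaryLevel p T a s)⁺ = T := by
  rw [sum_posPart_sub_eq hs hs']
  linarith [stationaryLevel_mul_sub_card (T := T) (a := a) hp]

variable [Fintype ι] [LinearOrder ι] [LocallyFiniteOrderBot ι] {m : ι}

lemma le_stationaryLevel_of_isGreatest (hp : (Fintype.card ι : 𝕜) < p) (ha : Antitone a)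
    (hm : IsGreatest {i | stationaryLevel p T a (Finset.Iic i) < a i} m) {j : ι} (hj : m < j) :
    a j ≤ stationaryLevel p T a (Finset.Iic m) := by
  by_contra! hlt
  have hle : stationaryLevel p T a (Finset.Iic j) ≤ stationaryLevel p T a (Finset.Iic m) := by
    refine stationaryLevel_le_of_subset (Finset.Iic_subset_Iic.mpr hj.le)
      (lt_of_le_of_lt (mod_cast Finset.card_le_univ _) hp) fun k hk ↦ ?_
    have hkj : k ≤ j := Finset.mem_Iic.mp (Finset.mem_sdiff.mp hk).1
    exact hlt.le.trans (ha hkj)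
  exact (hm.2 (hle.trans_lt hlt)).not_gt hj

theorem stmt_5_general (hp : (Fintype.card ι : 𝕜) < p) (ha : Antitone a)
    (hm : IsGreatest {i | stationaryLevel p T a (Finset.Iic i) < a i} m) :
    (0 ≤ stationaryLevel p T a (Finset.Iic m) ↔ ∑ k ∈ Finset.Iic m, a k ≤ T) ∧
      ∀ x, profiledObjective p T a (stationaryLevel p T a (Finset.Iic m)) +
          (p - Fintype.card ι) * (x - stationaryLevel p T a (Finset.Iic m)) ^ 2 ≤
        profiledObjective p T a x := by
  have hcard : ((Finset.Iic m).card : 𝕜) < p := lt_of_le_of_lt (mod_cast Finset.card_le_univ _) hp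
  refine ⟨stationaryLevel_nonneg_iff hcard, profiledObjective_add_sq_le_of_stationary <|
    mul_stationaryLevel_add_sum_posPart hcard.ne' (fun k hk ↦ ?_) fun k hk ↦ ?_⟩
  · exact hm.1.le.trans (ha (Finset.mem_Iic.mp hk))
  · exact le_stationaryLevel_of_isGreatest hp ha hm (by simpa using hk)

end OrderedField

/-- The scalar minimization characterizing the optimal noise variance in the proof of
Proposition 1.  Indices `L ∈ {1,…,K}` are represented by `ℓ : Fin K` via `L = ℓ.val + 1`,
so `d_L = d ℓ` and `Σ_{k=1}^{L}(d_k − γ)` is the sum over `k ∈ Finset.Iic ℓ`.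
With `L̂ = max 𝓛` and `x̂ = c(L̂)`, we have `x̂ ≥ 0` and `x̂` minimizes
`g(x) = p x² − 2 x T − Σₖ ((dₖ − x − γ)₊)²` over `x ≥ 0`. -/
theorem stmt_5 (p K : ℕ) (hK : 1 ≤ K) (hpK : K < p)
    (d : Fin K → ℝ) (hd : Antitone d) (hdnn : ∀ k, 0 ≤ d k)
    (γ : ℝ) (hγ : 0 ≤ γ)
    (T : ℝ) (hT : ∑ k : Fin K, d k ≤ T)
    (hd1 : γ < d ⟨0, hK⟩)
    (c : Fin K → ℝ)
    (hc : ∀ ℓ : Fin K,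
      c ℓ = (T - ∑ k ∈ Finset.Iic ℓ, (d k - γ)) / ((p : ℝ) - ((ℓ : ℕ) + 1)))
    (Lset : Finset (Fin K))
    (hLset : Lset = Finset.univ.filter (fun ℓ : Fin K => c ℓ < d ℓ - γ))
    (hne : Lset.Nonempty)
    (xhat : ℝ) (hxhat : xhat = c (Lset.max' hne)) :
    0 ≤ xhat ∧
      ∀ x : ℝ, 0 ≤ x →
        (p : ℝ) * xhat ^ 2 - 2 * xhat * T - ∑ k : Fin K, (max (d k - xhat - γ) 0) ^ 2 ≤
          (p : ℝ) * x ^ 2 - 2 * x * T - ∑ k : Fin K, (max (d k - x - γ) 0) ^ 2 := by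
  have hKp : (Fintype.card (Fin K) : ℝ) < p := by simpa using hpK
  obtain rfl : c = fun ℓ ↦ stationaryLevel (p : ℝ) T (fun k ↦ d k - γ) (Finset.Iic ℓ) := by
    ext ℓ
    simp [hc, stationaryLevel]
  subst hLset hxhat
  obtain ⟨hnonneg, hgrowth⟩ := stmt_5_general hKp (fun _ _ h ↦ sub_le_sub_right (hd h) γ)
    (by simpa using Finset.isGreatest_max' _ hne)
  refine ⟨hnonneg.mpr ((sum_sub_const_le_sum_univ hdnn hγ _).trans hT), fun x _ ↦ ?_⟩
  simp only [sub_right_comm (d _) _ γ]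
  exact (le_add_of_nonneg_right (mul_nonneg (sub_pos.mpr hKp).le (sq_nonneg _))).trans (hgrowth x)
end

section
/- Let p > K ≥ 1 be integers, let d₁ ≥ d₂ ≥ … ≥ d_K be real numbers, let γ ≥ 0, and let T be a real number. For L ∈ {1,…,K} define c(L) = (T − Σ_{k=1}^{L}(d_k − γ))/(p − L). Assume the set 𝓛 = { L ∈ {1,…,K} : d_L − γ > c(L) } is nonempty and set L̂ = max 𝓛 and σ̂² = c(L̂). Then for every k ∈ {1,…,K}: d_k − γ > σ̂² if and only if k ≤ L̂. -/
open BigOperators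

/-!
Write `x k = d k - γ`. The residual mean `c ℓ` spreads what is left of `T` after removing the terms
`x k`, `k ≤ ℓ`, over the remaining `p - #{k ≤ ℓ}` places. If `c ℓ < y`, then removing further terms
that are all at least `y` leaves the mean below `y`. Since `x` is antitone, for `ℓ < k` this applies
with `y = x k` to the terms between `ℓ` and `k`: `c ℓ < x k` forces `c k < x k`, which is impossible
when `ℓ` is the greatest index with `c ℓ < x ℓ`.
-/

section ResidualMean

variable {ι 𝕜 : Type*} [Field 𝕜]

/-- The mean of the `p - #s` terms left over after the terms `x j`, `j ∈ s`, are removed from a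
family of `p` terms with total `T`; this is `c(L)` when `s` consists of the first `L` indices.
Only the total and the number of the remaining terms enter, so `p` is an arbitrary scalar; the
value is meaningful for `#s < p`. -/
def residualMean (x : ι → 𝕜) (T p : 𝕜) (s : Finset ι) : 𝕜 :=
  (T - ∑ j ∈ s, x j) / (p - s.card)

variable [LinearOrder 𝕜] [IsStrictOrderedRing 𝕜] {x : ι → 𝕜} {T p y : 𝕜} {s t : Finset ι}

theorem residualMean_lt_iff (hs : (s.card : 𝕜) < p) :
    residualMean x T p s < y ↔ T < ∑ j ∈ s, x j + (p - s.card) * y := by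
  rw [residualMean, div_lt_iff₀' (sub_pos.mpr hs), sub_lt_iff_lt_add']

theorem residualMean_lt_of_subset [DecidableEq ι] (hst : s ⊆ t) (ht : (t.card : 𝕜) < p)
    (hy : ∀ j ∈ t \ s, y ≤ x j) (hs : residualMean x T p s < y) : residualMean x T p t < y := by
  have hcard : ((t \ s).card : 𝕜) + s.card = t.card :=
    mod_cast Finset.card_sdiff_add_card_eq_card hst
  have hs_card : (s.card : 𝕜) < p := ht.trans_le' (mod_cast Finset.card_le_card hst)
  have hremoved : (t \ s).card * y ≤ ∑ j ∈ t \ s, x j := by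
    simpa only [nsmul_eq_mul] using Finset.card_nsmul_le_sum _ _ _ hy
  rw [residualMean_lt_iff ht]
  calc
    T < ∑ j ∈ s, x j + (p - s.card) * y := (residualMean_lt_iff hs_card).mp hs
    _ = (t \ s).card * y + ∑ j ∈ s, x j + (p - t.card) * y := by rw [← hcard]; ring
    _ ≤ ∑ j ∈ t \ s, x j + ∑ j ∈ s, x j + (p - t.card) * y := by gcongr
    _ = ∑ j ∈ t, x j + (p - t.card) * y := by rw [Finset.sum_sdiff hst]

theorem residualMean_Iic_lt_of_le [Preorder ι] [LocallyFiniteOrderBot ι] (hx : Antitone x)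
    {ℓ k : ι} (hℓk : ℓ ≤ k) (hk : ((Finset.Iic k).card : 𝕜) < p)
    (hlt : residualMean x T p (Finset.Iic ℓ) < x k) :
    residualMean x T p (Finset.Iic k) < x k := by
  classical
  refine residualMean_lt_of_subset (Finset.Iic_subset_Iic.mpr hℓk) hk (fun j hj => ?_) hlt
  exact hx (Finset.mem_Iic.mp (Finset.mem_sdiff.mp hj).1)

theorem stmt_6_general [LinearOrder ι] [LocallyFiniteOrderBot ι] (hx : Antitone x)
    (hp : ∀ k : ι, ((Finset.Iic k).card : 𝕜) < p) {ℓ : ι}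
    (hℓ : IsGreatest {i | residualMean x T p (Finset.Iic i) < x i} ℓ) (k : ι) :
    residualMean x T p (Finset.Iic ℓ) < x k ↔ k ≤ ℓ := by
  refine ⟨fun hlt => ?_, fun hk => hℓ.1.trans_le (hx hk)⟩
  by_contra! hℓk
  exact hℓk.not_ge (hℓ.2 (residualMean_Iic_lt_of_le hx hℓk.le (hp k) hlt))

end ResidualMean

/-- The identification `L̂* = L̂` in the proof of Proposition 1.  Indices `L ∈ {1,…,K}`
are represented by `ℓ : Fin K` via `L = ℓ.val + 1`, so `d_L = d ℓ`,
`Σ_{k=1}^{L}(d_k − γ)` is the sum over `k ∈ Finset.Iic ℓ`, and the conclusion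
"`d_k − γ > σ̂²` iff `k ≤ L̂`" reads `d k − γ > σ̂² ↔ k ≤ L̂` in `Fin K`. -/
theorem stmt_6 (p K : ℕ) (hK : 1 ≤ K) (hpK : K < p)
    (d : Fin K → ℝ) (hd : Antitone d)
    (γ : ℝ) (hγ : 0 ≤ γ) (T : ℝ)
    (c : Fin K → ℝ)
    (hc : ∀ ℓ : Fin K,
      c ℓ = (T - ∑ k ∈ Finset.Iic ℓ, (d k - γ)) / ((p : ℝ) - ((ℓ : ℕ) + 1)))
    (Lset : Finset (Fin K))
    (hLset : Lset = Finset.univ.filter (fun ℓ : Fin K => c ℓ < d ℓ - γ))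
    (hne : Lset.Nonempty)
    (Lhat : Fin K) (hLhat : Lhat = Lset.max' hne)
    (σ2hat : ℝ) (hσ2hat : σ2hat = c Lhat) :
    ∀ k : Fin K, σ2hat < d k - γ ↔ k ≤ Lhat := by
  obtain rfl : c = fun ℓ => residualMean (d · - γ) T (p : ℝ) (Finset.Iic ℓ) := by
    ext ℓ; simp [hc, residualMean]
  have hcard (k : Fin K) : ((Finset.Iic k).card : ℝ) < p := by
    simpa only [Fin.card_Iic, Nat.cast_lt] using (Nat.succ_le_of_lt k.isLt).trans_lt hpK
  have hx : Antitone (d · - γ) := fun _ _ h => sub_le_sub_right (hd h) γ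
  subst hLhat hσ2hat hLset
  exact stmt_6_general hx hcard (by simpa using Finset.isGreatest_max' _ hne)
end
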